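/- arXiv:1809.10439 — 2 statements merged into one kernel-verified Lean document; each statement's English description precedes it below -/
import Mathlib

section
/- Let b ∈ ℂ with Re b = −1/2. Then 𝒜 ∩ C_b = {−1}, i.e., when R cos θ = 3/2 the arc 𝒜 and the circle C_b intersect exactly at the point −1. -/
/-!
Write `w = 1 + b² - 2bz`. The arc is `(z - b)² = ρw` with `ρ ∈ [0, 1]`, that is
`(1 - p - w)² = 4ρpw` with `p = b²`, and the circle is `‖w‖ = ‖p‖`. When `‖w‖ = ‖p‖`, the sum
`p + w` is a real multiple of a square root of `pw`. On the arc so is `1 - p - w`, hence so is `1`.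
So `pw > 0`, which means `w = conj p`. This leaves one candidate for `z`, whose parameter is
`ρ = (1 - 2 Re p)² / (4‖p‖²)`; it is at most `1` exactly when `|Re b| ≥ 1/2`.
-/

open Metric
open scoped ComplexConjugate

/-- The arc `𝒜` attached to the parameter `b` of a Joukowski airfoil. The two values of `s` for each
`ρ` are the two square roots, so no branch is chosen. -/
def joukowskiArc (b : ℂ) : Set ℂ :=
  {z | ∃ ρ : ℝ, ρ ∈ Set.Icc (0 : ℝ) 1 ∧ ∃ s : ℂ,
    s ^ 2 = (ρ : ℂ) * (1 - b ^ 2 + b ^ 2 * (ρ : ℂ)) ∧ z = b * (1 - (ρ : ℂ)) + s}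

section ComplexNumbers

variable {x p q b : ℂ} {t : ℝ}

-- The conclusion encodes, without choosing a root, that `x` is a real multiple of `√(p * q)`.
lemma mul_conj_eq_conj_mul_of_sq_eq (ht : 0 ≤ t) (hpq : ‖p‖ = ‖q‖) (hx : x ^ 2 = t * (p * q)) :
    x * conj p = conj x * q := by
  rcases eq_or_ne x 0 with rfl | hx0
  · simp
  have norm_sq_x : ‖x‖ ^ 2 = t * ‖p‖ ^ 2 := by
    rw [← norm_pow, hx, norm_mul, norm_mul, Complex.norm_of_nonneg ht, ← hpq, sq]
  apply mul_left_cancel₀ hx0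
  calc x * (x * conj p) = t * q * (p * conj p) := by linear_combination conj p * hx
    _ = (t * ‖p‖ ^ 2 : ℝ) * q := by rw [Complex.mul_conj']; push_cast; ring
    _ = x * (conj x * q) := by rw [← norm_sq_x, ← mul_assoc, Complex.mul_conj']; push_cast; rfl

lemma eq_conj_of_one_sub_sub_sq_eq (ht : 0 ≤ t) (hpq : ‖p‖ = ‖q‖)
    (h : (1 - p - q) ^ 2 = t * (p * q)) : q = conj p := by
  have hreal := mul_conj_eq_conj_mul_of_sq_eq ht hpq h
  have hnorm : p * conj p = q * conj q := by rw [Complex.mul_conj', Complex.mul_conj', hpq]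
  simp only [map_sub, map_one] at hreal
  linear_combination -hreal - hnorm

lemma one_sub_sub_conj_sq_eq_iff :
    (1 - p - conj p) ^ 2 = t * (p * conj p) ↔ (1 - 2 * p.re) ^ 2 = t * ‖p‖ ^ 2 := by
  rw [sub_sub, Complex.add_conj, Complex.mul_conj']
  norm_cast

lemma exists_one_sub_sub_sq_eq_iff (hp : p ≠ 0) (hpq : ‖p‖ = ‖q‖) :
    (∃ ρ ∈ Set.Icc (0 : ℝ) 1, (1 - p - q) ^ 2 = (4 * ρ : ℝ) * (p * q)) ↔
      q = conj p ∧ |1 - 2 * p.re| ≤ 2 * ‖p‖ := by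
  constructor
  · rintro ⟨ρ, ⟨hρ0, hρ1⟩, h⟩
    obtain rfl := eq_conj_of_one_sub_sub_sq_eq (by positivity) hpq h
    refine ⟨rfl, abs_le_of_sq_le_sq ?_ (by positivity)⟩
    rw [one_sub_sub_conj_sq_eq_iff.mp h]
    nlinarith [sq_nonneg ‖p‖]
  · rintro ⟨rfl, h⟩
    refine ⟨((1 - 2 * p.re) / (2 * ‖p‖)) ^ 2, ⟨sq_nonneg _, ?_⟩, ?_⟩
    · rwa [sq_le_one_iff_abs_le_one, abs_div, abs_of_pos (by positivity : 0 < 2 * ‖p‖),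
        div_le_one (by positivity)]
    · rw [one_sub_sub_conj_sq_eq_iff]
      field_simp
      ring

lemma abs_one_sub_two_mul_re_sq_le_iff :
    |1 - 2 * (b ^ 2).re| ≤ 2 * ‖b ^ 2‖ ↔ 1 / 2 ≤ |b.re| := by
  have re_sq : (b ^ 2).re = b.re ^ 2 - b.im ^ 2 := by simp [sq]
  have norm_sq : ‖b ^ 2‖ = b.re ^ 2 + b.im ^ 2 := by
    rw [norm_pow, Complex.sq_norm, Complex.normSq_apply, sq, sq]
  have half_le_iff : 1 / 2 ≤ |b.re| ↔ (1 / 2) ^ 2 ≤ b.re ^ 2 := by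
    rw [sq_le_sq, abs_of_pos (by norm_num : (0 : ℝ) < 1 / 2)]
  rw [re_sq, norm_sq, half_le_iff, abs_le]
  constructor
  · rintro ⟨-, h⟩
    linarith
  · intro h
    constructor <;> nlinarith [sq_nonneg b.im]

end ComplexNumbers

section Joukowski

variable {b z : ℂ}

lemma mem_joukowskiArc_iff :
    z ∈ joukowskiArc b ↔
      ∃ ρ ∈ Set.Icc (0 : ℝ) 1, (z - b) ^ 2 = ρ * (1 + b ^ 2 - 2 * b * z) := by
  refine exists_congr fun ρ => and_congr_right fun _ => ⟨?_, fun h => ?_⟩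
  · rintro ⟨s, hs, rfl⟩
    linear_combination hs
  · exact ⟨z - b * (1 - ρ), by linear_combination h, by ring⟩

lemma mem_joukowskiArc_iff_one_sub_sub_sq (hb : b ≠ 0) :
    z ∈ joukowskiArc b ↔ ∃ ρ ∈ Set.Icc (0 : ℝ) 1,
      (1 - b ^ 2 - (1 + b ^ 2 - 2 * b * z)) ^ 2 =
        (4 * ρ : ℝ) * (b ^ 2 * (1 + b ^ 2 - 2 * b * z)) := by
  have scale_ne_zero : 4 * b ^ 2 ≠ 0 := by simp [hb]
  rw [mem_joukowskiArc_iff]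
  refine exists_congr fun ρ => and_congr_right fun _ => ?_
  rw [← mul_right_inj' scale_ne_zero]
  push_cast
  ring_nf

lemma mem_sphere_iff_norm_sq_eq (hb : b ≠ 0) :
    z ∈ sphere ((b + 1 / b) / 2) (‖b‖ / 2) ↔ ‖b ^ 2‖ = ‖1 + b ^ 2 - 2 * b * z‖ := by
  have norm_scale_ne_zero : ‖2 * b‖ ≠ 0 := by simp [hb]
  have scaled_offset : 1 + b ^ 2 - 2 * b * z = 2 * b * ((b + 1 / b) / 2 - z) := by
    field_simp
    ring
  have scaled_radius : ‖b ^ 2‖ = ‖2 * b‖ * (‖b‖ / 2) := by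
    rw [norm_pow, norm_mul, Complex.norm_ofNat]
    ring
  rw [mem_sphere', dist_eq_norm, scaled_offset, scaled_radius,
    norm_mul (2 * b) (_ - z), mul_right_inj' norm_scale_ne_zero, eq_comm]

lemma mem_joukowskiArc_inter_sphere_iff (hb : b ≠ 0) :
    z ∈ joukowskiArc b ∩ sphere ((b + 1 / b) / 2) (‖b‖ / 2) ↔
      z = (1 + b ^ 2 - conj b ^ 2) / (2 * b) ∧ 1 / 2 ≤ |b.re| := by
  have candidate_iff : z = (1 + b ^ 2 - conj b ^ 2) / (2 * b) ↔
      1 + b ^ 2 - 2 * b * z = conj (b ^ 2) := by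
    rw [eq_div_iff (mul_ne_zero two_ne_zero hb), map_pow]
    constructor <;> intro h <;> linear_combination -h
  rw [candidate_iff, ← abs_one_sub_two_mul_re_sq_le_iff, Set.mem_inter_iff,
    mem_joukowskiArc_iff_one_sub_sub_sq hb, mem_sphere_iff_norm_sq_eq hb]
  constructor
  · rintro ⟨harc, hnorm⟩
    exact (exists_one_sub_sub_sq_eq_iff (pow_ne_zero 2 hb) hnorm).mp harc
  · intro h
    have hnorm : ‖b ^ 2‖ = ‖1 + b ^ 2 - 2 * b * z‖ := by rw [h.1, Complex.norm_conj]
    exact ⟨(exists_one_sub_sub_sq_eq_iff (pow_ne_zero 2 hb) hnorm).mpr h, hnorm⟩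

theorem stmt_5_general (hb : b ≠ 0) :
    joukowskiArc b ∩ sphere ((b + 1 / b) / 2) (‖b‖ / 2) =
      if 1 / 2 ≤ |b.re| then {(1 + b ^ 2 - conj b ^ 2) / (2 * b)} else ∅ := by
  ext z
  rw [mem_joukowskiArc_inter_sphere_iff hb]
  split_ifs with h
  · rw [and_iff_left h, Set.mem_singleton_iff]
  · simp only [h, and_false, Set.mem_empty_iff_false]

lemma one_add_sq_sub_conj_sq_div_eq_neg_one (hb : b.re = -1 / 2) :
    (1 + b ^ 2 - conj b ^ 2) / (2 * b) = -1 := by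
  have hb0 : b ≠ 0 := fun h => by norm_num [h] at hb
  have conj_b : conj b = -1 - b := by
    rw [eq_sub_iff_add_eq', Complex.add_conj, hb]
    norm_num
  rw [conj_b, div_eq_iff (mul_ne_zero two_ne_zero hb0)]
  ring

end Joukowski

/-- Let `b ∈ ℂ` with `Re b = −1/2`. Then `𝒜 ∩ C_b = {−1}`: when
`R cos θ = 3/2` the arc `𝒜` and the circle `C_b` intersect exactly at the point `−1`. -/
theorem stmt_5 (b : ℂ) (hb : b.re = -1/2)
    (A : Set ℂ)
    (hA : A = {z : ℂ | ∃ ρ : ℝ, ρ ∈ Set.Icc (0 : ℝ) 1 ∧ ∃ s : ℂ,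
      s ^ 2 = (ρ : ℂ) * (1 - b ^ 2 + b ^ 2 * (ρ : ℂ)) ∧ z = b * (1 - (ρ : ℂ)) + s})
    (c : ℂ) (hc : c = (b + 1 / b) / 2)
    (Cb : Set ℂ) (hCb : Cb = {z : ℂ | ‖z - c‖ = ‖b‖ / 2}) :
    A ∩ Cb = {(-1 : ℂ)} := by
  have hb0 : b ≠ 0 := fun h => by norm_num [h] at hb
  have hA' : A = joukowskiArc b := hA
  have hCb' : Cb = sphere ((b + 1 / b) / 2) (‖b‖ / 2) := by
    rw [hCb, hc]
    exact Set.ext fun _ => mem_sphere_iff_norm.symm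
  have hhalf : 1 / 2 ≤ |b.re| := by norm_num [hb]
  rw [hA', hCb', stmt_5_general hb0, if_pos hhalf, one_add_sq_sub_conj_sq_div_eq_neg_one hb]
end

section
/- Let b be real with b < −1/2 (i.e., R = 1 − b > 3/2). Define c = (b + 1/b)/2, the loop L_b^+ = {z ∈ ℂ : ∃s ∈ ℂ, s² = z² − 1, |b − z − s| = |b| and |z − c| ≤ |b|/2}, and the segment I_b = [1/(2b), 1] ⊂ ℝ. Then the zeros of f_n accumulate on L_b^+ ∪ I_b: for every ε > 0 there exists N such that for all n ≥ N, every zero of f_n lies within distance ε of L_b^+ ∪ I_b. -/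
/-!
With `z = (p + p⁻¹) / 2`, that is `s = (p - p⁻¹) / 2`, the equation `f_n(z) = 0` becomes
`(p - b) ^ n + (p⁻¹ - b) ^ n = (-b) ^ n`. For large `n` it cannot hold near a point where one of
the three moduli `‖p - b‖`, `‖p⁻¹ - b‖`, `‖b‖` is strictly the largest, so by compactness the zeros
accumulate where the two largest moduli agree. Such a tie involving `‖b‖` puts `z` on the loop,
because `z - c = -(p - b) (p⁻¹ - b) / (2 b)`. The tie `‖p - b‖ = ‖p⁻¹ - b‖ ≥ ‖b‖` forces
`‖p‖ = 1`, and then `z = re p` with `2 b z ≤ 1`.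
-/

open Filter Topology

section DominantNorm

/-- None of `u`, `v`, `w` is strictly larger in norm than the other two. -/
def NoDominantNorm {E : Type*} [Norm E] (u v w : E) : Prop :=
  ‖u‖ ≤ max ‖v‖ ‖w‖ ∧ ‖v‖ ≤ max ‖u‖ ‖w‖ ∧ ‖w‖ ≤ max ‖u‖ ‖v‖

theorem NoDominantNorm.norm_eq_norm {E : Type*} [Norm E] {u v w : E} (h : NoDominantNorm u v w) :
    (‖u‖ = ‖v‖ ∧ ‖w‖ ≤ ‖u‖) ∨ (‖u‖ = ‖w‖ ∧ ‖v‖ ≤ ‖w‖) ∨ (‖v‖ = ‖w‖ ∧ ‖u‖ ≤ ‖w‖) := by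
  simp only [NoDominantNorm, le_max_iff] at h
  generalize ‖u‖ = a, ‖v‖ = b, ‖w‖ = c at h ⊢
  grind

theorem eventually_two_mul_pow_lt_pow {r R : ℝ} (hr : 0 < r) (hrR : r < R) :
    ∀ᶠ n : ℕ in atTop, 2 * r ^ n < R ^ n := by
  have hlim := tendsto_pow_atTop_atTop_of_one_lt ((one_lt_div hr).2 hrR)
  filter_upwards [hlim.eventually_gt_atTop 2] with n hn
  rwa [div_pow, lt_div_iff₀ (by positivity)] at hn

theorem eventually_norm_pow_add_norm_pow_lt {α E : Type*} [SeminormedAddGroup E] {l : Filter α}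
    {u v w : α → E} {U V W : E} (hu : Tendsto u l (𝓝 U)) (hv : Tendsto v l (𝓝 V))
    (hw : Tendsto w l (𝓝 W)) (h : max ‖V‖ ‖W‖ < ‖U‖) :
    ∀ᶠ q : ℕ × α in atTop ×ˢ l, ‖v q.2‖ ^ q.1 + ‖w q.2‖ ^ q.1 < ‖u q.2‖ ^ q.1 := by
  obtain ⟨r, hVWr, hrU⟩ := exists_between h
  obtain ⟨R, hrR, hRU⟩ := exists_between hrU
  obtain ⟨hVr, hWr⟩ := max_lt_iff.1 hVWr
  have hr : 0 < r := (norm_nonneg V).trans_lt hVr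
  have hR : 0 < R := hr.trans hrR
  have hx : ∀ᶠ x in l, ‖v x‖ < r ∧ ‖w x‖ < r ∧ R < ‖u x‖ :=
    (hv.norm.eventually_lt_const hVr).and
      ((hw.norm.eventually_lt_const hWr).and (hu.norm.eventually_const_lt hRU))
  filter_upwards [(eventually_two_mul_pow_lt_pow hr hrR).prod_mk hx]
  rintro ⟨n, x⟩ ⟨hn, hvr, hwr, hRu⟩
  calc ‖v x‖ ^ n + ‖w x‖ ^ n ≤ r ^ n + r ^ n := by gcongr
    _ = 2 * r ^ n := (two_mul _).symm
    _ < R ^ n := hn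
    _ ≤ ‖u x‖ ^ n := by gcongr

theorem eventually_pow_add_pow_ne_pow {α 𝕜 : Type*} [NormedDivisionRing 𝕜] {l : Filter α}
    {u v w : α → 𝕜} {U V W : 𝕜} (hu : Tendsto u l (𝓝 U)) (hv : Tendsto v l (𝓝 V))
    (hw : Tendsto w l (𝓝 W)) (h : ¬ NoDominantNorm U V W) :
    ∀ᶠ q : ℕ × α in atTop ×ˢ l, u q.2 ^ q.1 + v q.2 ^ q.1 ≠ w q.2 ^ q.1 := by
  have hdom : max ‖V‖ ‖W‖ < ‖U‖ ∨ max ‖U‖ ‖W‖ < ‖V‖ ∨ max ‖U‖ ‖V‖ < ‖W‖ := by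
    simpa only [NoDominantNorm, not_and_or, not_le] using h
  rcases hdom with hU | hV | hW
  · filter_upwards [eventually_norm_pow_add_norm_pow_lt hu hv hw hU] with ⟨n, x⟩ hlt heq
    have hle := norm_sub_le (w x ^ n) (v x ^ n)
    rw [← eq_sub_of_add_eq heq] at hle
    simp only [norm_pow] at hle
    linarith
  · filter_upwards [eventually_norm_pow_add_norm_pow_lt hv hu hw hV] with ⟨n, x⟩ hlt heq
    have hle := norm_sub_le (w x ^ n) (u x ^ n)
    rw [← eq_sub_of_add_eq' heq] at hle
    simp only [norm_pow] at hle
    linarith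
  · filter_upwards [eventually_norm_pow_add_norm_pow_lt hw hu hv hW] with ⟨n, x⟩ hlt heq
    have hle := norm_add_le (u x ^ n) (v x ^ n)
    rw [heq] at hle
    simp only [norm_pow] at hle
    linarith

theorem norm_le_two_mul_of_pow_add_pow_eq_pow {𝕜 : Type*} [NormedDivisionRing 𝕜] {u v w : 𝕜}
    {r : ℝ} {n : ℕ} (hn : n ≠ 0) (h : u ^ n + v ^ n = w ^ n) (hv : ‖v‖ ≤ r) (hw : ‖w‖ ≤ r) :
    ‖u‖ ≤ 2 * r := by
  have hr : 0 ≤ r := (norm_nonneg v).trans hv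
  refine le_of_pow_le_pow_left₀ hn (by positivity) ?_
  calc ‖u‖ ^ n = ‖w ^ n - v ^ n‖ := by rw [← eq_sub_of_add_eq h, norm_pow]
    _ ≤ ‖w‖ ^ n + ‖v‖ ^ n := by simpa only [norm_pow] using norm_sub_le (w ^ n) (v ^ n)
    _ ≤ r ^ n + r ^ n := by gcongr
    _ = 2 * r ^ n := (two_mul _).symm
    _ ≤ 2 ^ n * r ^ n := by gcongr; exact le_self_pow₀ one_le_two hn
    _ = (2 * r) ^ n := (mul_pow 2 r n).symm

end DominantNorm

section Joukowski

/-- The Joukowski map `J(p) = (p + 1/p) / 2`, which uniformizes the curve `s ^ 2 = z ^ 2 - 1` by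
`z = J(p)`, `s = (p - 1/p) / 2`. -/
noncomputable def joukowski (p : ℂ) : ℂ := (p + p⁻¹) / 2

theorem joukowski_inv (p : ℂ) : joukowski p⁻¹ = joukowski p := by
  rw [joukowski, joukowski, inv_inv, add_comm]

theorem sq_eq_joukowski_sq_sub_one {p : ℂ} (hp : p ≠ 0) :
    ((p - p⁻¹) / 2) ^ 2 = joukowski p ^ 2 - 1 := by
  rw [joukowski]
  field_simp
  ring

theorem joukowski_sub_joukowski {p b : ℂ} (hp : p ≠ 0) (hb : b ≠ 0) :
    joukowski p - joukowski b = -((p - b) * (p⁻¹ - b)) / (2 * b) := by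
  rw [joukowski, joukowski]
  field_simp
  ring

theorem continuousAt_joukowski {p : ℂ} (hp : p ≠ 0) : ContinuousAt joukowski p :=
  (continuousAt_id.add (continuousAt_inv₀ hp)).div_const 2

theorem exists_one_le_norm_joukowski_eq (z : ℂ) : ∃ p : ℂ, 1 ≤ ‖p‖ ∧ joukowski p = z := by
  obtain ⟨s, hs⟩ := IsAlgClosed.exists_pow_nat_eq (z ^ 2 - 1) two_pos
  have hmul : (z + s) * (z - s) = 1 := by linear_combination -hs
  have hinv : (z + s)⁻¹ = z - s := inv_eq_of_mul_eq_one_right hmul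
  have hz : joukowski (z + s) = z := by rw [joukowski, hinv]; ring
  rcases le_total 1 ‖z + s‖ with h | h
  · exact ⟨z + s, h, hz⟩
  · refine ⟨(z + s)⁻¹, ?_, by rw [joukowski_inv, hz]⟩
    rw [norm_inv]
    exact (one_le_inv₀ (norm_pos_iff.2 (left_ne_zero_of_mul_eq_one hmul))).2 h

theorem joukowski_of_norm_eq_one {p : ℂ} (hp : ‖p‖ = 1) : joukowski p = (p.re : ℂ) := by
  rw [joukowski, Complex.inv_eq_conj hp, Complex.re_eq_add_conj]

end Joukowski

section FaberZeros

variable {b : ℂ}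

/-- The zeros of `f_n(z) = (z - b + s) ^ n + (z - b - s) ^ n - (-b) ^ n`, where `s` is either square
root of `z ^ 2 - 1`. -/
def faberZeros (b : ℂ) (n : ℕ) : Set ℂ :=
  {z | ∀ s : ℂ, s ^ 2 = z ^ 2 - 1 → (z - b + s) ^ n + (z - b - s) ^ n - (-b) ^ n = 0}

/-- The points `p = z + s` at which no single term of
`f_n(z) = (p - b) ^ n + (p⁻¹ - b) ^ n - (-b) ^ n` dominates as `n → ∞`. -/
def faberTieSet (b : ℂ) : Set ℂ :=
  {p | p ≠ 0 ∧ NoDominantNorm (p - b) (p⁻¹ - b) (-b)}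

theorem pow_add_pow_eq_pow_of_joukowski_mem_faberZeros {p : ℂ} {n : ℕ} (hp : p ≠ 0)
    (h : joukowski p ∈ faberZeros b n) : (p - b) ^ n + (p⁻¹ - b) ^ n = (-b) ^ n := by
  have hzero := h _ (sq_eq_joukowski_sq_sub_one hp)
  have hadd : joukowski p - b + (p - p⁻¹) / 2 = p - b := by rw [joukowski]; ring
  have hsub : joukowski p - b - (p - p⁻¹) / 2 = p⁻¹ - b := by rw [joukowski]; ring
  rwa [hadd, hsub, sub_eq_zero] at hzero

theorem norm_le_of_joukowski_mem_faberZeros {p : ℂ} {n : ℕ} (hn : n ≠ 0) (hp : 1 ≤ ‖p‖)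
    (h : joukowski p ∈ faberZeros b n) : ‖p‖ ≤ 2 + 3 * ‖b‖ := by
  have hp0 : p ≠ 0 := norm_pos_iff.1 (zero_lt_one.trans_le hp)
  have hinv : ‖p⁻¹ - b‖ ≤ 1 + ‖b‖ := by
    refine (norm_sub_le _ _).trans ?_
    gcongr
    exact (norm_inv p).trans_le (inv_le_one_of_one_le₀ hp)
  have hneg : ‖-b‖ ≤ 1 + ‖b‖ := by rw [norm_neg]; linarith
  have hsub : ‖p - b‖ ≤ 2 * (1 + ‖b‖) := norm_le_two_mul_of_pow_add_pow_eq_pow hn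
    (pow_add_pow_eq_pow_of_joukowski_mem_faberZeros hp0 h) hinv hneg
  linarith [norm_le_norm_add_norm_sub' p b]

theorem eventually_joukowski_mem_thickening_of_mem_faberZeros {p : ℂ} {ε : ℝ} (hε : 0 < ε)
    (hp : p ≠ 0) :
    ∀ᶠ q : ℕ × ℂ in atTop ×ˢ 𝓝 p, joukowski q.2 ∈ faberZeros b q.1 →
      joukowski q.2 ∈ Metric.thickening ε (joukowski '' faberTieSet b) := by
  have hne : ∀ᶠ q : ℕ × ℂ in atTop ×ˢ 𝓝 p, q.2 ≠ 0 := (eventually_ne_nhds hp).prod_inr _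
  by_cases htie : NoDominantNorm (p - b) (p⁻¹ - b) (-b)
  · have hmem : joukowski p ∈ Metric.thickening ε (joukowski '' faberTieSet b) :=
      Metric.self_subset_thickening hε _ ⟨p, ⟨hp, htie⟩, rfl⟩
    have hnear := (continuousAt_joukowski hp).eventually_mem
      (Metric.isOpen_thickening.mem_nhds hmem)
    filter_upwards [hnear.prod_inr atTop] with q hq _ using hq
  · have hfar := eventually_pow_add_pow_ne_pow (tendsto_id.sub_const b)
      ((tendsto_inv₀ hp).sub_const b) tendsto_const_nhds htie
    filter_upwards [hfar, hne] with q hq hq0 hzero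
    exact absurd (pow_add_pow_eq_pow_of_joukowski_mem_faberZeros hq0 hzero) hq

theorem eventually_faberZeros_subset_thickening (b : ℂ) {ε : ℝ} (hε : 0 < ε) :
    ∀ᶠ n in atTop, faberZeros b n ⊆ Metric.thickening ε (joukowski '' faberTieSet b) := by
  let K : Set ℂ := Metric.closedBall 0 (2 + 3 * ‖b‖) ∩ {p | 1 ≤ ‖p‖}
  have hK : IsCompact K :=
    (isCompact_closedBall _ _).inter_right (isClosed_le continuous_const continuous_norm)
  have hlocal := hK.mem_prod_nhdsSet_of_forall fun p hp ↦
    eventually_joukowski_mem_thickening_of_mem_faberZeros (b := b) hε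
      (norm_pos_iff.1 (zero_lt_one.trans_le hp.2))
  have hunif := eventually_prod_principal_iff.1
    (Filter.prod_mono_right atTop principal_le_nhdsSet hlocal)
  filter_upwards [hunif, eventually_ne_atTop 0] with n hn hn0 z hz
  obtain ⟨p, hp, rfl⟩ := exists_one_le_norm_joukowski_eq z
  have hpK : ‖p‖ ≤ 2 + 3 * ‖b‖ := norm_le_of_joukowski_mem_faberZeros hn0 hp hz
  exact hn p ⟨mem_closedBall_zero_iff.2 hpK, hp⟩ hz

end FaberZeros

section LoopAndSegment

/-- The loop `L_b⁺`; the centre `c = (b + 1/b) / 2` is `joukowski b`. -/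
def faberLoop (b : ℂ) : Set ℂ :=
  {z | ∃ s : ℂ, s ^ 2 = z ^ 2 - 1 ∧ ‖b - z - s‖ = ‖b‖ ∧ ‖z - joukowski b‖ ≤ ‖b‖ / 2}

/-- The segment `I_b = [1/(2b), 1]` of the real axis in the complex plane. -/
def faberSegment (b : ℝ) : Set ℂ :=
  {z | ∃ x : ℝ, x ∈ Set.Icc (1 / (2 * b)) 1 ∧ z = (x : ℂ)}

theorem joukowski_mem_faberLoop {p b : ℂ} (hp : p ≠ 0) (hb : b ≠ 0) (h : ‖p - b‖ = ‖b‖)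
    (hinv : ‖p⁻¹ - b‖ ≤ ‖b‖) : joukowski p ∈ faberLoop b := by
  refine ⟨(p - p⁻¹) / 2, sq_eq_joukowski_sq_sub_one hp, ?_, ?_⟩
  · rw [← h, norm_sub_rev p b, joukowski]
    congr 1
    ring
  · calc ‖joukowski p - joukowski b‖ = ‖p⁻¹ - b‖ / 2 := by
          rw [joukowski_sub_joukowski hp hb, norm_div, norm_neg, norm_mul, norm_mul, h,
            Complex.norm_two]
          field_simp
      _ ≤ ‖b‖ / 2 := by gcongr

theorem norm_sub_ofReal_sq (p : ℂ) (b : ℝ) :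
    ‖p - b‖ ^ 2 = ‖p‖ ^ 2 - 2 * b * p.re + b ^ 2 := by
  simp only [Complex.sq_norm, Complex.normSq_apply, Complex.sub_re, Complex.sub_im,
    Complex.ofReal_re, Complex.ofReal_im]
  ring

theorem norm_inv_sub_ofReal_sq {p : ℂ} (hp : p ≠ 0) (b : ℝ) :
    ‖p‖ ^ 2 * ‖p⁻¹ - b‖ ^ 2 = 1 - 2 * b * p.re + b ^ 2 * ‖p‖ ^ 2 := by
  rw [norm_sub_ofReal_sq, norm_inv, Complex.inv_re, ← Complex.sq_norm]
  field_simp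

theorem norm_ofReal_le_norm_sub_iff {p : ℂ} {b : ℝ} :
    ‖(b : ℂ)‖ ≤ ‖p - b‖ ↔ 2 * b * p.re ≤ ‖p‖ ^ 2 := by
  rw [← sq_le_sq₀ (norm_nonneg _) (norm_nonneg _), norm_sub_ofReal_sq, Complex.norm_real,
    Real.norm_eq_abs, sq_abs]
  constructor <;> intro h <;> linarith

theorem norm_eq_one_of_norm_sub_ofReal_eq {p : ℂ} {b : ℝ} (hp : p ≠ 0)
    (h : ‖p - b‖ = ‖p⁻¹ - b‖) (hle : ‖(b : ℂ)‖ ≤ ‖p - b‖) : ‖p‖ = 1 := by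
  have hinv := norm_inv_sub_ofReal_sq hp b
  rw [← h, norm_sub_ofReal_sq] at hinv
  have hfactor : (‖p‖ ^ 2 - 1) * (‖p‖ ^ 2 - 2 * b * p.re + 1) = 0 := by
    linear_combination hinv
  have hpos : ‖p‖ ^ 2 - 2 * b * p.re + 1 ≠ 0 := by
    have hnonneg := sub_nonneg.2 (norm_ofReal_le_norm_sub_iff.1 hle)
    positivity
  have hsq : ‖p‖ ^ 2 = 1 := sub_eq_zero.1 ((mul_eq_zero_iff_right hpos).1 hfactor)
  exact (pow_eq_one_iff_of_nonneg (norm_nonneg p) two_ne_zero).1 hsq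

theorem joukowski_mem_faberSegment {p : ℂ} {b : ℝ} (hb : b < 0) (hp : p ≠ 0)
    (h : ‖p - b‖ = ‖p⁻¹ - b‖) (hle : ‖(b : ℂ)‖ ≤ ‖p - b‖) :
    joukowski p ∈ faberSegment b := by
  have hone := norm_eq_one_of_norm_sub_ofReal_eq hp h hle
  refine ⟨p.re, ⟨?_, hone ▸ Complex.re_le_norm p⟩, joukowski_of_norm_eq_one hone⟩
  have hre : 2 * b * p.re ≤ 1 := by
    simpa only [hone, one_pow] using norm_ofReal_le_norm_sub_iff.1 hle
  rw [div_le_iff_of_neg (by linarith)]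
  linarith

theorem joukowski_image_faberTieSet_subset {b : ℝ} (hb : b < 0) :
    joukowski '' faberTieSet b ⊆ faberLoop b ∪ faberSegment b := by
  rintro _ ⟨p, ⟨hp, htie⟩, rfl⟩
  have hb0 : (b : ℂ) ≠ 0 := Complex.ofReal_ne_zero.2 hb.ne
  have hcases := htie.norm_eq_norm
  rw [norm_neg] at hcases
  rcases hcases with ⟨heq, hle⟩ | ⟨heq, hle⟩ | ⟨heq, hle⟩
  · exact Or.inr (joukowski_mem_faberSegment hb hp heq hle)
  · exact Or.inl (joukowski_mem_faberLoop hp hb0 heq hle)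
  · rw [← joukowski_inv]
    exact Or.inl (joukowski_mem_faberLoop (inv_ne_zero hp) hb0 heq (by rwa [inv_inv]))

end LoopAndSegment

theorem stmt_13_general (b : ℝ) (hb : b < 0)
    (c : ℂ) (hc : c = ((b : ℂ) + 1 / (b : ℂ)) / 2)
    (Lb : Set ℂ)
    (hLb : Lb = {z : ℂ | ∃ s : ℂ, s ^ 2 = z ^ 2 - 1 ∧
      ‖(b : ℂ) - z - s‖ = ‖(b : ℂ)‖ ∧
      ‖z - c‖ ≤ ‖(b : ℂ)‖ / 2})
    (Ib : Set ℂ)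
    (hIb : Ib = {z : ℂ | ∃ x : ℝ, x ∈ Set.Icc (1 / (2 * b)) 1 ∧ z = (x : ℂ)}) :
    ∀ ε > (0 : ℝ), ∃ N : ℕ, ∀ n : ℕ, N ≤ n →
      ∀ z : ℂ, (∀ s : ℂ, s ^ 2 = z ^ 2 - 1 →
          (z - (b : ℂ) + s) ^ n + (z - (b : ℂ) - s) ^ n - (-(b : ℂ)) ^ n = 0) →
        ∃ w ∈ Lb ∪ Ib, dist z w ≤ ε := by
  intro ε hε
  have hc' : c = joukowski b := by rw [hc, one_div, joukowski]
  subst hc' hLb hIb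
  obtain ⟨N, hN⟩ := eventually_atTop.1 (eventually_faberZeros_subset_thickening (b : ℂ) hε)
  refine ⟨N, fun n hn z hz ↦ ?_⟩
  obtain ⟨w, hw, hdist⟩ := Metric.mem_thickening_iff.1 (hN n hn hz)
  exact ⟨w, joukowski_image_faberTieSet_subset hb hw, hdist.le⟩

/-- Let `b` be real with `b < −1/2`. With `c = (b + 1/b)/2`, the loop
`L_b⁺ = {z : ∃ s, s² = z² − 1 ∧ |b − z − s| = |b| ∧ |z − c| ≤ |b|/2}` and the segment
`I_b = [1/(2b), 1] ⊂ ℝ`, the zeros of `f_n` accumulate on `L_b⁺ ∪ I_b`: for every `ε > 0`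
there exists `N` such that for all `n ≥ N`, every zero of `f_n` lies within distance `ε`
of `L_b⁺ ∪ I_b`. -/
theorem stmt_13 (b : ℝ) (hb : b < -1/2)
    (c : ℂ) (hc : c = ((b : ℂ) + 1 / (b : ℂ)) / 2)
    (Lb : Set ℂ)
    (hLb : Lb = {z : ℂ | ∃ s : ℂ, s ^ 2 = z ^ 2 - 1 ∧
      ‖(b : ℂ) - z - s‖ = ‖(b : ℂ)‖ ∧
      ‖z - c‖ ≤ ‖(b : ℂ)‖ / 2})
    (Ib : Set ℂ)
    (hIb : Ib = {z : ℂ | ∃ x : ℝ, x ∈ Set.Icc (1 / (2 * b)) 1 ∧ z = (x : ℂ)}) :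
    ∀ ε > (0 : ℝ), ∃ N : ℕ, ∀ n : ℕ, N ≤ n →
      ∀ z : ℂ, (∀ s : ℂ, s ^ 2 = z ^ 2 - 1 →
          (z - (b : ℂ) + s) ^ n + (z - (b : ℂ) - s) ^ n - (-(b : ℂ)) ^ n = 0) →
        ∃ w ∈ Lb ∪ Ib, dist z w ≤ ε :=
  stmt_13_general b (hb.trans (by norm_num)) c hc Lb hLb Ib hIb
end
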